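/- Let n ≥ 2, let Λ : ℕ → [0,1] be nonincreasing with Λ(0) = 1 and satisfying hypothesis H_Λ, and let μ be a probability measure on [0,1] satisfying hypothesis H_μ. For every constant gain ε ∈ (0,1), the Markov transition kernel P_ε of the one-dimensional SOM algorithm admits an invariant probability measure ν^ε with ν^ε(F_n^+) = 1. -/

import Mathlib

open MeasureTheory Set Filter Topology
open scoped Classical ENNReal

noncomputable section

/-- The winning unit: the smallest index `i` minimizing `|x - m i|`. -/
def winner {n : ℕ} [NeZero n] (m : Fin n → ℝ) (x : ℝ) : Fin n :=
  (Finset.univ.filter fun i : Fin n => ∀ j, |x - m i| ≤ |x - m j|).min'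
    (by
      obtain ⟨i, -, hi⟩ := Finset.exists_min_image (Finset.univ : Finset (Fin n))
        (fun i => |x - m i|) ⟨0, Finset.mem_univ _⟩
      exact ⟨i, Finset.mem_filter.mpr ⟨Finset.mem_univ _,
        fun j => hi j (Finset.mem_univ _)⟩⟩)

/-- One step of the one-dimensional SOM algorithm. -/
def somUpdate {n : ℕ} [NeZero n] (Λ : ℕ → ℝ) (ε : ℝ) (m : Fin n → ℝ) (x : ℝ) :
    Fin n → ℝ :=
  fun i => m i - ε * Λ (Nat.dist i.1 (winner m x).1) * (m i - x)

/-- `F_n^+` : increasingly ordered states with values in `(0,1)`. -/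
def Fplus (n : ℕ) : Set (Fin n → ℝ) :=
  {m | StrictMono m ∧ ∀ i, m i ∈ Set.Ioo (0 : ℝ) 1}

/-- `ν` is an invariant measure for the SOM Markov transition kernel
`P_ε(m, ·) = image of μ under x ↦ T_ε(m,x)`. -/
def IsSOMInvariant {n : ℕ} [NeZero n] (μ : Measure ℝ) (Λ : ℕ → ℝ) (ε : ℝ)
    (ν : Measure (Fin n → ℝ)) : Prop :=
  ν.bind (fun m => μ.map fun x => somUpdate Λ ε m x) = ν

/-- Hypothesis `H_Λ`. -/
def HLambda (n : ℕ) (Λ : ℕ → ℝ) : Prop :=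
  ∃ k₀ : ℕ, 2 * k₀ + 1 < n ∧ Λ (k₀ + 1) < Λ k₀

/-- Hypothesis `H_μ` on the density `f`. -/
def Hmu (f : ℝ → ℝ) : Prop :=
  (∀ x ∈ Set.Ioo (0 : ℝ) 1, 0 < f x) ∧
  (StrictConcaveOn ℝ (Set.Ioo (0 : ℝ) 1) (fun x => Real.log (f x)) ∨
    (ConcaveOn ℝ (Set.Ioo (0 : ℝ) 1) (fun x => Real.log (f x)) ∧
      ∃ a b : ℝ, Tendsto f (nhdsWithin 0 (Set.Ioi 0)) (nhds a) ∧
        Tendsto f (nhdsWithin 1 (Set.Iio 1)) (nhds b) ∧ 0 < a + b))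

/-!
The units of an ordered state cut `[0, 1]` into `n + 1` gaps, and `F_n^+` is the set where all of
them are positive. One update multiplies each gap by at least `1 - ε`, because the pull towards the
input weakens with the distance to the winner. Between the distances `k₀` and `k₀ + 1` it weakens by
`Λ k₀ - Λ (k₀ + 1) > 0`, so that the gap found there on either side of the winner becomes long if
the input is far from the neighbours of the winner. This is the case for an input in a long gap,
close to one of its end points, and a combinatorial argument selects the gap and the end point so
that one of the two gaps affected was short before. As the inputs have full support, after `n` steps
all gaps are long with a probability bounded below uniformly in the initial state. Together with the
factor `1 - ε` this makes every orbit of the chain tight in `F_n^+`. The chain is Feller on `F_n^+`,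
because an input equidistant from two units has probability zero, and the Krylov–Bogoliubov theorem
applies.
-/

open ProbabilityTheory BoundedContinuousFunction Function

/-! ### The Krylov–Bogoliubov theorem -/

section KrylovBogoliubov

variable {X : Type*} [MeasurableSpace X]

/-- The Cesàro average `(ν 0 + ⋯ + ν N) / (N + 1)` of a sequence of probability measures. -/
def cesaroAverage (ν : ℕ → ProbabilityMeasure X) (N : ℕ) :
    ProbabilityMeasure X :=
  ⟨((N + 1 : ℕ) : ℝ≥0∞)⁻¹ • ∑ k ∈ Finset.range (N + 1), (ν k : Measure X), ⟨by
    simp only [Measure.smul_apply, Measure.finsetSum_apply, measure_univ, Finset.sum_const,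
      Finset.card_range, smul_eq_mul, nsmul_eq_mul, mul_one]
    exact ENNReal.inv_mul_cancel (by simp) (by simp)⟩⟩

lemma cesaroAverage_apply_le {ν : ℕ → ProbabilityMeasure X} {s : Set X} {a : ℝ≥0∞}
    (h : ∀ k, (ν k : Measure X) s ≤ a) (N : ℕ) : (cesaroAverage ν N : Measure X) s ≤ a := by
  calc (cesaroAverage ν N : Measure X) s
      = ((N + 1 : ℕ) : ℝ≥0∞)⁻¹ * ∑ k ∈ Finset.range (N + 1), (ν k : Measure X) s := by
        simp [cesaroAverage]
    _ ≤ ((N + 1 : ℕ) : ℝ≥0∞)⁻¹ * ((N + 1 : ℕ) * a) := by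
        gcongr
        simpa using Finset.sum_le_card_nsmul (Finset.range (N + 1)) _ a fun k _ => h k
    _ = a := by
        rw [← mul_assoc, ENNReal.inv_mul_cancel (by simp) (by simp), one_mul]

variable [TopologicalSpace X]

/-- The Feller property of a transition kernel: it maps bounded continuous functions to continuous
functions. -/
def IsFeller (κ : Kernel X X) : Prop :=
  ∀ g : X →ᵇ ℝ, Continuous fun x => ∫ y, g y ∂κ x

lemma isTightMeasureSet_cesaroAverage {ν : ℕ → ProbabilityMeasure X}
    (hν : IsTightMeasureSet (range fun k => (ν k : Measure X))) :
    IsTightMeasureSet {(ρ : Measure X) | ρ ∈ range (cesaroAverage ν)} := by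
  rw [isTightMeasureSet_iff_exists_isCompact_measure_compl_le] at hν ⊢
  intro a ha
  obtain ⟨K, hK, hνK⟩ := hν a ha
  refine ⟨K, hK, ?_⟩
  rintro _ ⟨_, ⟨N, rfl⟩, rfl⟩
  exact cesaroAverage_apply_le (fun k => hνK _ (mem_range_self k)) N

variable [OpensMeasurableSpace X]

lemma integral_cesaroAverage (ν : ℕ → ProbabilityMeasure X) (N : ℕ) (g : X →ᵇ ℝ) :
    ∫ x, g x ∂(cesaroAverage ν N : Measure X) =
      ((N : ℝ) + 1)⁻¹ * ∑ k ∈ Finset.range (N + 1), ∫ x, g x ∂(ν k : Measure X) := by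
  simp only [cesaroAverage, ProbabilityMeasure.coe_mk]
  rw [integral_smul_measure, integral_finsetSum_measure fun k _ => g.integrable _,
    ENNReal.toReal_inv, ENNReal.toReal_natCast, smul_eq_mul, Nat.cast_add_one]

variable {κ : Kernel X X} [IsMarkovKernel κ]

/-- The action `g ↦ κ g` of a Feller kernel on bounded continuous functions. -/
def IsFeller.act (hκ : IsFeller κ) (g : X →ᵇ ℝ) : X →ᵇ ℝ :=
  .ofNormedAddCommGroup (fun x => ∫ y, g y ∂κ x) (hκ g) ‖g‖ fun x => g.norm_integral_le_norm (κ x)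

lemma IsFeller.integral_bind (hκ : IsFeller κ) (ρ : Measure X) [IsProbabilityMeasure ρ]
    (g : X →ᵇ ℝ) : ∫ x, g x ∂(ρ.bind κ) = ∫ x, hκ.act g x ∂ρ := by
  have h := Kernel.integral_comp (κ := Kernel.const Unit ρ) (η := κ) (a := ()) (g.integrable _)
  rwa [Kernel.comp_apply, Kernel.const_apply] at h

-- Along an orbit the difference of the two integrals telescopes.
lemma IsFeller.tendsto_integral_act_sub_cesaroAverage (hκ : IsFeller κ)
    {ν : ℕ → ProbabilityMeasure X} (hν : ∀ k, (ν (k + 1) : Measure X) = (ν k : Measure X).bind κ)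
    (g : X →ᵇ ℝ) :
    Tendsto (fun N => ∫ x, hκ.act g x ∂(cesaroAverage ν N : Measure X) -
      ∫ x, g x ∂(cesaroAverage ν N : Measure X)) atTop (𝓝 0) := by
  have telescope (N : ℕ) : ∫ x, hκ.act g x ∂(cesaroAverage ν N : Measure X) -
      ∫ x, g x ∂(cesaroAverage ν N : Measure X) =
      ((N : ℝ) + 1)⁻¹ * (∫ x, g x ∂(ν (N + 1) : Measure X) - ∫ x, g x ∂(ν 0 : Measure X)) := by
    rw [integral_cesaroAverage, integral_cesaroAverage, ← mul_sub, ← Finset.sum_sub_distrib,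
      ← Finset.sum_range_sub fun k => ∫ x, g x ∂(ν k : Measure X)]
    congr 1
    exact Finset.sum_congr rfl fun k _ => by rw [hν, hκ.integral_bind]
  have inv_tendsto : Tendsto (fun N : ℕ => ((N : ℝ) + 1)⁻¹ * (‖g‖ + ‖g‖)) atTop (𝓝 0) := by
    simpa using (tendsto_one_div_add_atTop_nhds_zero_nat (𝕜 := ℝ)).mul_const (‖g‖ + ‖g‖)
  refine squeeze_zero_norm (fun N => ?_) inv_tendsto
  rw [telescope, norm_mul, Real.norm_of_nonneg (by positivity)]
  gcongr
  exact (norm_sub_le _ _).trans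
    (add_le_add (g.norm_integral_le_norm _) (g.norm_integral_le_norm _))

theorem IsFeller.exists_invariant [BorelSpace X] [T2Space X] [HasOuterApproxClosed X]
    (hκ : IsFeller κ) {ν : ℕ → ProbabilityMeasure X}
    (hν : ∀ k, (ν (k + 1) : Measure X) = (ν k : Measure X).bind κ)
    (htight : IsTightMeasureSet (range fun k => (ν k : Measure X))) :
    ∃ π : Measure X, IsProbabilityMeasure π ∧ κ.Invariant π := by
  obtain ⟨π, -, hπ⟩ := (isCompact_closure_of_isTightMeasureSet
    (isTightMeasureSet_cesaroAverage htight)).ultrafilter_le_nhds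
    ((hyperfilter ℕ).map (cesaroAverage ν))
    (le_principal_iff.mpr (mem_of_superset range_mem_map subset_closure))
  have tendsto_π := ProbabilityMeasure.tendsto_iff_forall_integral_tendsto.mp
    (show Tendsto (cesaroAverage ν) (hyperfilter ℕ) (𝓝 π) from hπ)
  refine ⟨π, inferInstance, ext_of_forall_integral_eq_of_IsFiniteMeasure fun g => ?_⟩
  rw [hκ.integral_bind]
  exact sub_eq_zero.mp <| tendsto_nhds_unique ((tendsto_π (hκ.act g)).sub (tendsto_π g))
    ((hκ.tendsto_integral_act_sub_cesaroAverage hν g).mono_left Nat.hyperfilter_le_atTop)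

end KrylovBogoliubov

/-! ### Tightness from a decay bound and a return bound -/

section Tightness

variable {X : Type*} [MeasurableSpace X] {κ : Kernel X X}

lemma isMarkovKernel_pow [IsMarkovKernel κ] (k : ℕ) : IsMarkovKernel (κ ^ k) := by
  induction k with
  | zero => exact inferInstanceAs (IsMarkovKernel Kernel.id)
  | succ k ih => exact inferInstanceAs (IsMarkovKernel ((κ ^ k) ∘ₖ κ))

lemma bind_pow_apply (x : X) (k : ℕ) : ((κ ^ k) x).bind κ = (κ ^ (k + 1)) x := by
  rw [_root_.pow_succ', ← Kernel.comp_apply κ (κ ^ k) x]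
  rfl

lemma pow_le_kernel_pow_apply {W : ℕ → Set X} (hW : ∀ j, MeasurableSet (W j)) {p : ℝ≥0∞} {T : ℕ}
    (hstep : ∀ j < T, ∀ x ∈ W j, p ≤ κ x (W (j + 1))) {x : X} (hx : x ∈ W 0) :
    p ^ T ≤ (κ ^ T) x (W T) := by
  induction T with
  | zero =>
    rw [pow_zero, pow_zero]
    exact (Measure.dirac_apply_of_mem hx).ge
  | succ T ih =>
    calc p ^ (T + 1) = p * p ^ T := pow_succ' p T
      _ ≤ p * (κ ^ T) x (W T) := by
          gcongr
          exact ih fun j hj => hstep j (by omega)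
      _ = ∫⁻ _ in W T, p ∂(κ ^ T) x := (setLIntegral_const _ _).symm
      _ ≤ ∫⁻ y in W T, κ y (W (T + 1)) ∂(κ ^ T) x :=
          setLIntegral_mono' (hW T) fun y hy => hstep T T.lt_succ_self y hy
      _ ≤ ∫⁻ y, κ y (W (T + 1)) ∂(κ ^ T) x := setLIntegral_le_lintegral _ _
      _ = (κ ^ (T + 1)) x (W (T + 1)) :=
          (Kernel.pow_succ_apply_eq_lintegral κ T x (hW _)).symm

variable {D : X → ℝ} {r : ℝ}

lemma ae_pow_mul_le (hD : Measurable D) (hr : 0 ≤ r) (hdecay : ∀ x, ∀ᵐ y ∂κ x, r * D x ≤ D y)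
    (k : ℕ) (x : X) : ∀ᵐ y ∂(κ ^ k) x, r ^ k * D x ≤ D y := by
  have hmeas (a : ℝ) : MeasurableSet {y | a ≤ D y} := measurableSet_le measurable_const hD
  induction k with
  | zero =>
    simp only [pow_zero, one_mul]
    exact (ae_dirac_iff (hmeas _)).mpr le_rfl
  | succ k ih =>
    rw [← bind_pow_apply]
    refine Measure.ae_comp_of_ae_ae (hmeas _) ?_
    filter_upwards [ih] with y hy
    filter_upwards [hdecay y] with z hz
    calc r ^ (k + 1) * D x = r * (r ^ k * D x) := by ring
      _ ≤ r * D y := by gcongr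
      _ ≤ D z := hz

variable {T : ℕ} {δ : ℝ} {q : ℝ≥0∞}

-- To be below `r ^ T * η` after `T` more steps, the chain must already be below `η`, and then it
-- fails to return above `δ` with probability at most `q`.
lemma kernel_pow_add_sublevel_le (hD : Measurable D) (hr : 0 ≤ r)
    (hdecay : ∀ x, ∀ᵐ y ∂κ x, r * D x ≤ D y) (hreturn : ∀ x, (κ ^ T) x {y | D y < δ} ≤ q)
    {η : ℝ} (hη : r ^ T * η ≤ δ) (k : ℕ) (x : X) :
    (κ ^ (k + T)) x {y | D y < r ^ T * η} ≤ q * (κ ^ k) x {y | D y < η} := by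
  have hmeas (a : ℝ) : MeasurableSet {y | D y < a} := measurableSet_lt hD measurable_const
  have pointwise (y : X) :
      (κ ^ T) y {z | D z < r ^ T * η} ≤ {y | D y < η}.indicator (fun _ => q) y := by
    by_cases hy : D y < η
    · have hsub : {z | D z < r ^ T * η} ⊆ {z | D z < δ} := fun z hz => lt_of_lt_of_le hz hη
      rw [indicator_of_mem (by exact hy)]
      exact (measure_mono hsub).trans (hreturn y)
    · rw [indicator_of_notMem (by exact hy), nonpos_iff_eq_zero, measure_eq_zero_iff_ae_notMem]
      filter_upwards [ae_pow_mul_le hD hr hdecay T y] with z hz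
      refine not_lt.mpr (le_trans ?_ hz)
      gcongr
      exact not_lt.mp hy
  calc (κ ^ (k + T)) x {y | D y < r ^ T * η}
      = ∫⁻ y, (κ ^ T) y {z | D z < r ^ T * η} ∂(κ ^ k) x :=
        Kernel.pow_add_apply_eq_lintegral κ k T x (hmeas _)
    _ ≤ ∫⁻ y, {y | D y < η}.indicator (fun _ => q) y ∂(κ ^ k) x := lintegral_mono pointwise
    _ = q * (κ ^ k) x {y | D y < η} := lintegral_indicator_const (hmeas _) q

lemma kernel_pow_sublevel_le_pow [IsMarkovKernel κ] (hD : Measurable D) (hr : 0 ≤ r) (hr1 : r ≤ 1)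
    (hδ : 0 ≤ δ) (hdecay : ∀ x, ∀ᵐ y ∂κ x, r * D x ≤ D y)
    (hreturn : ∀ x, (κ ^ T) x {y | D y < δ} ≤ q) (j k : ℕ) (x : X) :
    (κ ^ (k + j * T)) x {y | D y < r ^ (j * T) * δ} ≤ q ^ j := by
  have := isMarkovKernel_pow (κ := κ)
  induction j with
  | zero => simpa using prob_le_one
  | succ j ih =>
    have hle : r ^ T * (r ^ (j * T) * δ) ≤ δ := by
      rw [← mul_assoc, ← pow_add]
      exact mul_le_of_le_one_left hδ (pow_le_one₀ hr hr1)
    calc (κ ^ (k + (j + 1) * T)) x {y | D y < r ^ ((j + 1) * T) * δ}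
        = (κ ^ (k + j * T + T)) x {y | D y < r ^ T * (r ^ (j * T) * δ)} := by
          rw [show k + (j + 1) * T = k + j * T + T by ring,
            show r ^ ((j + 1) * T) * δ = r ^ T * (r ^ (j * T) * δ) by ring]
      _ ≤ q * (κ ^ (k + j * T)) x {y | D y < r ^ (j * T) * δ} :=
          kernel_pow_add_sublevel_le hD hr hdecay hreturn hle _ x
      _ ≤ q ^ (j + 1) := by
          rw [pow_succ']
          gcongr

lemma exists_forall_kernel_pow_sublevel_le [IsMarkovKernel κ] (hD : Measurable D) (hr : 0 < r)
    (hr1 : r ≤ 1) (hδ : 0 < δ) (hq : q < 1) (hdecay : ∀ x, ∀ᵐ y ∂κ x, r * D x ≤ D y)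
    (hreturn : ∀ x, (κ ^ T) x {y | D y < δ} ≤ q) {x : X} (hx : 0 < D x) {a : ℝ≥0∞} (ha : 0 < a) :
    ∃ η > 0, ∀ k, (κ ^ k) x {y | D y < η} ≤ a := by
  obtain ⟨j, hj⟩ := ((ENNReal.tendsto_pow_atTop_nhds_zero_of_lt_one hq).eventually
    (ge_mem_nhds ha)).exists
  refine ⟨r ^ (j * T) * min δ (D x), by positivity, fun k => ?_⟩
  rcases le_or_gt (j * T) k with hk | hk
  · obtain ⟨l, rfl⟩ := Nat.exists_eq_add_of_le' hk
    have hle : r ^ (j * T) * min δ (D x) ≤ r ^ (j * T) * δ := by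
      gcongr
      exact min_le_left _ _
    have hsub : {y | D y < r ^ (j * T) * min δ (D x)} ⊆ {y | D y < r ^ (j * T) * δ} :=
      fun y hy => lt_of_lt_of_le hy hle
    exact (measure_mono hsub).trans
      ((kernel_pow_sublevel_le_pow hD hr.le hr1 hδ.le hdecay hreturn j l x).trans hj)
  · suffices (κ ^ k) x {y | D y < r ^ (j * T) * min δ (D x)} = 0 from this.trans_le zero_le
    rw [measure_eq_zero_iff_ae_notMem]
    filter_upwards [ae_pow_mul_le hD hr.le hdecay k x] with y hy
    refine not_lt.mpr (le_trans ?_ hy)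
    exact mul_le_mul (pow_le_pow_of_le_one hr.le hr1 hk.le) (min_le_right _ _) (by positivity)
      (by positivity)

theorem isTightMeasureSet_range_kernel_pow [TopologicalSpace X] [IsMarkovKernel κ]
    (hD : Measurable D) (hcompact : ∀ η > 0, IsCompact {y | η ≤ D y}) (hr : 0 < r) (hr1 : r ≤ 1)
    (hδ : 0 < δ) (hq : q < 1) (hdecay : ∀ x, ∀ᵐ y ∂κ x, r * D x ≤ D y)
    (hreturn : ∀ x, (κ ^ T) x {y | D y < δ} ≤ q) {x : X} (hx : 0 < D x) :
    IsTightMeasureSet (range fun k => (κ ^ k) x) := by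
  rw [isTightMeasureSet_iff_exists_isCompact_measure_compl_le]
  intro a ha
  obtain ⟨η, hη, h⟩ :=
    exists_forall_kernel_pow_sublevel_le hD hr hr1 hδ hq hdecay hreturn hx ha
  refine ⟨{y | η ≤ D y}, hcompact η hη, ?_⟩
  rintro _ ⟨k, rfl⟩
  have hsub : {y | η ≤ D y}ᶜ ⊆ {y | D y < η} :=
    fun y (hy : ¬ η ≤ D y) => not_le.mp hy
  exact (measure_mono hsub).trans (h k)

end Tightness

/-! ### Chains driven by random maps -/

section RandomMap

variable {X Ω : Type*} [MeasurableSpace X] [MeasurableSpace Ω]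

/-- The transition kernel of the chain `X (k + 1) = T (X k) (ω k)` with independent inputs `ω k` of
law `μ`. -/
def randomMapKernel (μ : Measure Ω) [SFinite μ] (T : X → Ω → X) (hT : Measurable (uncurry T)) :
    Kernel X X where
  toFun x := μ.map (T x)
  measurable' := by
    have factor (x : X) : μ.map (T x) = (μ.map (Prod.mk x)).map (uncurry T) :=
      (Measure.map_map hT measurable_prodMk_left).symm
    simp only [factor]
    exact (Measure.measurable_map _ hT).comp Measurable.map_prodMk_left

variable {μ : Measure Ω} {T : X → Ω → X}

instance [IsProbabilityMeasure μ] (hT : Measurable (uncurry T)) :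
    IsMarkovKernel (randomMapKernel μ T hT) :=
  ⟨fun _ => Measure.isProbabilityMeasure_map hT.of_uncurry_left.aemeasurable⟩

lemma isFeller_randomMapKernel [TopologicalSpace X] [FirstCountableTopology X]
    [OpensMeasurableSpace X] [IsFiniteMeasure μ] (hT : Measurable (uncurry T))
    (hcont : ∀ x, ∀ᵐ ω ∂μ, ContinuousAt (fun y => T y ω) x) :
    IsFeller (randomMapKernel μ T hT) := by
  intro g
  have integral_eq (x : X) : ∫ y, g y ∂randomMapKernel μ T hT x = ∫ ω, g (T x ω) ∂μ :=
    integral_map hT.of_uncurry_left.aemeasurable g.continuous.measurable.aestronglyMeasurable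
  simp only [integral_eq, continuous_iff_continuousAt]
  intro x
  refine continuousAt_of_dominated (bound := fun _ => ‖g‖) (.of_forall fun y => ?_)
    (.of_forall fun y => .of_forall fun ω => g.norm_coe_le_norm _) (integrable_const _) ?_
  · exact (g.continuous.measurable.comp hT.of_uncurry_left).aestronglyMeasurable
  · filter_upwards [hcont x] with ω hω
    exact g.continuous.continuousAt.comp hω

lemma bind_map_eq_map_prod [SFinite μ] (hT : Measurable (uncurry T)) (π : Measure X) :
    π.bind (fun x => μ.map (T x)) = (π.prod μ).map (uncurry T) := by
  ext s hs
  rw [Measure.map_apply hT hs, Measure.prod_apply (hT hs)]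
  refine (Measure.bind_apply hs (randomMapKernel μ T hT).aemeasurable).trans ?_
  exact lintegral_congr fun x => Measure.map_apply hT.of_uncurry_left hs

lemma bind_map_eq_self_of_semiconj {Y Ω' : Type*} [MeasurableSpace Y] [MeasurableSpace Ω']
    [SFinite μ] (hT : Measurable (uncurry T)) {S : Y → Ω' → Y} (hS : Measurable (uncurry S))
    {φ : X → Y} (hφ : Measurable φ) {ψ : Ω → Ω'} (hψ : Measurable ψ)
    (hsemi : ∀ x ω, φ (T x ω) = S (φ x) (ψ ω)) {π : Measure X} [SFinite π]
    (hπ : π.bind (fun x => μ.map (T x)) = π) :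
    (π.map φ).bind (fun y => (μ.map ψ).map (S y)) = π.map φ := by
  calc (π.map φ).bind (fun y => (μ.map ψ).map (S y))
      = ((π.prod μ).map (Prod.map φ ψ)).map (uncurry S) := by
        rw [bind_map_eq_map_prod hS, Measure.map_prod_map _ _ hφ hψ]
    _ = (π.prod μ).map (φ ∘ uncurry T) := by
        rw [Measure.map_map hS (hφ.prodMap hψ)]
        congr 1
        exact funext fun z => (hsemi z.1 z.2).symm
    _ = π.map φ := by
        rw [← Measure.map_map hφ hT, ← bind_map_eq_map_prod hT, hπ]

end RandomMap

/-! ### Supports of measures -/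

section Support

variable {X : Type*} [MeasurableSpace X] {μ : Measure X} {s : Set X}

lemma map_val_comap_val_of_ae_mem (hs : MeasurableSet s) (hμ : ∀ᵐ x ∂μ, x ∈ s) :
    (μ.comap (Subtype.val : s → X)).map Subtype.val = μ := by
  rw [map_comap_subtype_coe hs, Measure.restrict_eq_self_of_ae_mem hμ]

lemma nullSingletonClass_comap_val [NullSingletonClass μ] (hs : MeasurableSet s) :
    NullSingletonClass (μ.comap (Subtype.val : s → X)) := by
  refine ⟨fun x => ?_⟩
  rw [(MeasurableEmbedding.subtype_coe hs).comap_apply, image_singleton, measure_singleton]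

variable [TopologicalSpace X]

lemma isOpenPosMeasure_comap_val (hs : MeasurableSet s) (hμ : ∀ᵐ x ∂μ, x ∈ s)
    (hsupp : s ⊆ μ.support) : (μ.comap (Subtype.val : s → X)).IsOpenPosMeasure := by
  refine ⟨fun U hU ⟨x, hx⟩ => ?_⟩
  obtain ⟨V, hV, rfl⟩ := isOpen_induced_iff.mp hU
  have hpos : 0 < μ V := (Measure.mem_support_iff_forall _).mp (hsupp x.2) V (hV.mem_nhds hx)
  rw [(MeasurableEmbedding.subtype_coe hs).comap_apply, Subtype.image_preimage_coe,
    Measure.measure_inter_eq_of_ae hμ]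
  exact hpos.ne'

lemma closure_subset_support_withDensity [OpensMeasurableSpace X] [μ.IsOpenPosMeasure]
    {g : X → ℝ≥0∞} (hs : IsOpen s) (hg : ContinuousOn g s) (hpos : ∀ x ∈ s, g x ≠ 0) :
    closure s ⊆ (μ.withDensity g).support := by
  refine closure_minimal ?_ Measure.isClosed_support
  have hac : μ.restrict s ≪ μ.withDensity g := by
    refine (withDensity_absolutelyContinuous' (hg.aemeasurable hs.measurableSet)
      ((ae_restrict_iff' hs.measurableSet).mpr (.of_forall hpos))).trans ?_
    rw [← restrict_withDensity hs.measurableSet]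
    exact Measure.restrict_le_self.absolutelyContinuous
  calc s = interior s ∩ μ.support := by
        rw [hs.interior_eq, Measure.support_eq_univ, inter_univ]
    _ ⊆ (μ.restrict s).support := Measure.interior_inter_support
    _ ⊆ (μ.withDensity g).support := hac.support_mono

end Support

lemma exists_pos_forall_le_measure_ball {X : Type*} [PseudoMetricSpace X] [MeasurableSpace X]
    {μ : Measure X} {K : Set X} (hK : IsCompact K) (hμ : K ⊆ μ.support) {ρ : ℝ} (hρ : 0 < ρ) :
    ∃ p > 0, ∀ x ∈ K, p ≤ μ (Metric.ball x ρ) := by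
  refine hK.induction_on (p := fun s => ∃ p > 0, ∀ x ∈ s, p ≤ μ (Metric.ball x ρ))
    ⟨1, one_pos, by simp⟩ ?_ ?_ fun x hx => ?_
  · rintro s t hst ⟨p, hp, h⟩
    exact ⟨p, hp, fun x hx => h x (hst hx)⟩
  · rintro s t ⟨p, hp, hs⟩ ⟨q, hq, ht⟩
    refine ⟨min p q, lt_min hp hq, ?_⟩
    rintro x (hx | hx)
    exacts [min_le_of_left_le (hs x hx), min_le_of_right_le (ht x hx)]
  · have hball := Metric.ball_mem_nhds x (half_pos hρ)
    refine ⟨Metric.ball x (ρ / 2), mem_nhdsWithin_of_mem_nhds hball, μ (Metric.ball x (ρ / 2)),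
      (Measure.mem_support_iff_forall x).mp (hμ hx) _ hball,
      fun y hy => measure_mono (Metric.ball_subset_ball' ?_)⟩
    linarith [Metric.mem_ball'.mp hy]

/-! ### The winning unit -/

section Winner

variable {n : ℕ} [NeZero n] {m : Fin n → ℝ} {x : ℝ} {w : Fin n}

lemma abs_sub_winner_le (m : Fin n → ℝ) (x : ℝ) (j : Fin n) :
    |x - m (winner m x)| ≤ |x - m j| := by
  have h : winner m x ∈ Finset.univ.filter fun i => ∀ j, |x - m i| ≤ |x - m j| :=
    Finset.min'_mem _ _
  exact (Finset.mem_filter.mp h).2 j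

lemma winner_le_iff : winner m x ≤ w ↔ ∃ i ≤ w, ∀ j, |x - m i| ≤ |x - m j| := by
  refine ⟨fun h => ⟨_, h, abs_sub_winner_le m x⟩, fun ⟨i, hi, h⟩ => ?_⟩
  exact (Finset.min'_le _ i (Finset.mem_filter.mpr ⟨Finset.mem_univ i, h⟩)).trans hi

lemma winner_eq_of_forall_lt (h : ∀ j ≠ w, |x - m w| < |x - m j|) : winner m x = w :=
  by_contra fun hne => (abs_sub_winner_le m x w).not_gt (h _ hne)

lemma winner_eq_of_forall_midpoint (hm : StrictMono m) (hlo : ∀ j < w, m j + m w < 2 * x)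
    (hhi : ∀ j > w, 2 * x < m w + m j) : winner m x = w := by
  refine winner_eq_of_forall_lt fun j hj => ?_
  rcases lt_or_gt_of_ne hj with hj | hj
  · refine lt_abs.mpr (.inl (abs_lt.mpr ⟨?_, ?_⟩)) <;> linarith [hm hj, hlo j hj]
  · refine lt_abs.mpr (.inr (abs_lt.mpr ⟨?_, ?_⟩)) <;> linarith [hm hj, hhi j hj]

lemma apply_le_of_lt_winner (hm : StrictMono m) {j : Fin n} (hj : j < winner m x) : m j ≤ x := by
  by_contra! hx
  have := abs_sub_winner_le m x j
  rw [abs_of_neg (by linarith [hm hj]), abs_of_neg (by linarith)] at this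
  linarith [hm hj]

lemma le_apply_of_winner_lt (hm : StrictMono m) {j : Fin n} (hj : winner m x < j) : x ≤ m j := by
  by_contra! hx
  have := abs_sub_winner_le m x j
  rw [abs_of_pos (by linarith [hm hj]), abs_of_pos (by linarith)] at this
  linarith [hm hj]

lemma measurable_winner : Measurable fun p : (Fin n → ℝ) × ℝ => winner p.1 p.2 := by
  refine measurable_of_Iic fun w => ?_
  simp only [preimage, mem_Iic, winner_le_iff, ofPred_exists, ofPred_and, ofPred_forall]
  refine .iUnion fun i => (MeasurableSet.const _).inter (.iInter fun j => ?_)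
  exact measurableSet_le (by fun_prop) (by fun_prop)

lemma measurable_somUpdate (Λ : ℕ → ℝ) (ε : ℝ) :
    Measurable (uncurry (somUpdate (n := n) Λ ε)) := by
  refine measurable_pi_lambda _ fun i => ?_
  have hΛ : Measurable fun p : (Fin n → ℝ) × ℝ => Λ (Nat.dist i (winner p.1 p.2)) :=
    (measurable_of_finite fun w : Fin n => Λ (Nat.dist i w)).comp measurable_winner
  exact ((measurable_pi_apply i).comp measurable_fst).sub
    ((hΛ.const_mul ε).mul (((measurable_pi_apply i).comp measurable_fst).sub measurable_snd))

lemma continuousAt_somUpdate (Λ : ℕ → ℝ) (ε : ℝ)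
    (h : ∀ j ≠ w, |x - m w| < |x - m j|) :
    ContinuousAt (fun m' => somUpdate Λ ε m' x) m := by
  have winner_eq : ∀ᶠ m' in 𝓝 m, winner m' x = w := by
    have : ∀ᶠ m' : Fin n → ℝ in 𝓝 m, ∀ j, j ≠ w → |x - m' w| < |x - m' j| := by
      refine eventually_all.mpr fun j => ?_
      by_cases hj : j = w
      · exact .of_forall fun _ hne => absurd hj hne
      · have hcont (i : Fin n) : ContinuousAt (fun m' : Fin n → ℝ => |x - m' i|) m :=
          (continuous_const.sub (continuous_apply i)).abs.continuousAt
        filter_upwards [(hcont w).eventually_lt (hcont j) (h j hj)] with m' hm' _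
        exact hm'
    exact this.mono fun m' => winner_eq_of_forall_lt
  have hcont : Continuous fun (m' : Fin n → ℝ) i => m' i - ε * Λ (Nat.dist i w) * (m' i - x) := by
    fun_prop
  refine hcont.continuousAt.congr ?_
  filter_upwards [winner_eq] with m' hm'
  funext i
  simp only [somUpdate, hm']

lemma ae_forall_abs_sub_winner_lt {S : Set ℝ} {ν : Measure S} [NullSingletonClass ν]
    (hm : Injective m) :
    ∀ᵐ x : S ∂ν, ∀ j ≠ winner m x, |x - m (winner m x)| < |x - m j| := by
  have ne_midpoint : ∀ᵐ x : S ∂ν, ∀ i j, (x : ℝ) ≠ (m i + m j) / 2 := by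
    refine ae_all_iff.mpr fun i => ae_all_iff.mpr fun j => measure_eq_zero_iff_ae_notMem.mp ?_
    exact Subsingleton.measure_zero (s := {x : S | (x : ℝ) = (m i + m j) / 2})
      (fun x hx y hy => Subtype.ext (hx.trans hy.symm)) ν
  filter_upwards [ne_midpoint] with x hx j hj
  refine (abs_sub_winner_le m x j).lt_of_ne fun heq => ?_
  rcases abs_eq_abs.mp heq with h | h
  · exact hj (hm (by linarith))
  · exact hx j (winner m x) (by linarith)

end Winner

/-! ### Padded states and gaps -/

section Padded

variable {n : ℕ} {m : Fin n → ℝ} {i k : ℕ}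

/-- The state `m` with the end points of `[0, 1]` adjoined: unit `i` of the network sits at position
`i + 1`, position `0` is the point `0`, and all positions after `n` are the point `1`. -/
def padded (m : Fin n → ℝ) : ℕ → ℝ
  | 0 => 0
  | k + 1 => if h : k < n then m ⟨k, h⟩ else 1

@[simp] lemma padded_zero (m : Fin n → ℝ) : padded m 0 = 0 := rfl

@[simp] lemma padded_val_succ (m : Fin n → ℝ) (i : Fin n) : padded m (i + 1) = m i := by
  simp [padded]

lemma padded_succ_of_lt (m : Fin n → ℝ) (h : k < n) : padded m (k + 1) = m ⟨k, h⟩ :=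
  dif_pos h

lemma padded_succ_of_le (m : Fin n → ℝ) (h : n ≤ k) : padded m (k + 1) = 1 :=
  dif_neg h.not_gt

/-- The length of the `i`-th of the `n + 1` intervals into which the units of `m` divide `[0, 1]`;
it is `0` for `i > n`. -/
def gap (m : Fin n → ℝ) (i : ℕ) : ℝ := padded m (i + 1) - padded m i

lemma gap_of_lt (m : Fin n → ℝ) (h : n < i) : gap m i = 0 := by
  obtain ⟨k, rfl⟩ := Nat.exists_eq_succ_of_ne_zero (by omega : i ≠ 0)
  rw [gap, padded_succ_of_le m (by omega), padded_succ_of_le m (by omega), sub_self]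

lemma sum_gap (m : Fin n → ℝ) : ∑ i ∈ Finset.range (n + 1), gap m i = 1 := by
  simp only [gap]
  rw [Finset.sum_range_sub, padded_succ_of_le m le_rfl, padded_zero, sub_zero]

lemma exists_inv_le_gap (m : Fin n → ℝ) : ∃ i ≤ n, ((n : ℝ) + 1)⁻¹ ≤ gap m i := by
  obtain ⟨i, hi, h⟩ := Finset.exists_le_of_sum_le (s := Finset.range (n + 1))
    (f := fun _ => ((n : ℝ) + 1)⁻¹) (g := gap m) (by simp) (by
      rw [sum_gap, Finset.sum_const, Finset.card_range, nsmul_eq_mul, Nat.cast_add_one]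
      exact (mul_inv_cancel₀ (by positivity)).le)
  exact ⟨i, Nat.lt_succ_iff.mp (Finset.mem_range.mp hi), h⟩

@[fun_prop]
lemma continuous_padded (k : ℕ) : Continuous fun m : Fin n → ℝ => padded m k := by
  rcases k with _ | k
  · exact continuous_const
  · by_cases hk : k < n
    · simpa only [padded_succ_of_lt _ hk] using continuous_apply _
    · simpa only [padded_succ_of_le _ (not_lt.mp hk)] using continuous_const

@[fun_prop]
lemma continuous_gap (i : ℕ) : Continuous fun m : Fin n → ℝ => gap m i := by
  unfold gap
  fun_prop

lemma monotone_padded_of_gap_pos (h : ∀ i ≤ n, 0 < gap m i) : Monotone (padded m) := by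
  refine monotone_nat_of_le_succ fun i => sub_nonneg.mp (show 0 ≤ gap m i from ?_)
  rcases le_or_gt i n with hi | hi
  exacts [(h i hi).le, (gap_of_lt m hi).ge]

lemma gap_pos (hm : m ∈ Fplus n) (hi : i ≤ n) : 0 < gap m i := by
  obtain ⟨hmono, hIoo⟩ := hm
  rw [gap, sub_pos]
  rcases i with _ | k
  · rcases Nat.eq_zero_or_pos n with hn | hn
    · simp [padded_succ_of_le m hn.le]
    · simpa [padded_succ_of_lt m hn] using (hIoo _).1
  · rw [padded_succ_of_lt m hi]
    rcases hi.lt_or_eq with hk | hk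
    · rw [padded_succ_of_lt m hk]
      exact hmono (Fin.mk_lt_mk.mpr k.lt_succ_self)
    · rw [padded_succ_of_le m hk.ge]
      exact (hIoo _).2

lemma mem_Fplus_of_gap_pos (h : ∀ i ≤ n, 0 < gap m i) : m ∈ Fplus n := by
  have hmono := monotone_padded_of_gap_pos h
  refine ⟨fun i j hij => ?_, fun i => ⟨?_, ?_⟩⟩
  · rw [← padded_val_succ m i, ← padded_val_succ m j]
    exact (sub_pos.mp (h (i + 1) i.2)).trans_le (hmono (by have := Fin.lt_def.mp hij; omega))
  · rw [← padded_val_succ m i]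
    exact (sub_pos.mp (h 0 n.zero_le)).trans_le (hmono (by omega))
  · rw [← padded_val_succ m i, ← padded_succ_of_le m le_rfl]
    exact (sub_pos.mp (h (i + 1) i.2)).trans_le (hmono (by omega))

lemma mem_Fplus_iff_gap_pos : m ∈ Fplus n ↔ ∀ i ≤ n, 0 < gap m i :=
  ⟨fun hm _ => gap_pos hm, mem_Fplus_of_gap_pos⟩

lemma monotone_padded (hm : m ∈ Fplus n) : Monotone (padded m) :=
  monotone_padded_of_gap_pos fun _ => gap_pos hm

lemma gap_nonneg (hm : m ∈ Fplus n) (i : ℕ) : 0 ≤ gap m i :=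
  sub_nonneg.mpr (monotone_padded hm i.le_succ)

lemma padded_mem_Icc (hm : m ∈ Fplus n) (k : ℕ) : padded m k ∈ Icc 0 1 := by
  refine ⟨monotone_padded hm k.zero_le, ?_⟩
  rw [← padded_succ_of_le m (le_max_left n k)]
  exact monotone_padded hm (by omega)

/-- The smallest gap of `m`. Its inverse plays the role of a Lyapunov function: it blows up at the
boundary of `Fplus n`. -/
def minGap (m : Fin n → ℝ) : ℝ :=
  (Finset.range (n + 1)).inf' Finset.nonempty_range_add_one (gap m)

lemma le_minGap_iff {a : ℝ} : a ≤ minGap m ↔ ∀ i ≤ n, a ≤ gap m i := by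
  simp [minGap]

lemma mem_Fplus_iff_minGap_pos : m ∈ Fplus n ↔ 0 < minGap m := by
  simp [mem_Fplus_iff_gap_pos, minGap]

lemma continuous_minGap : Continuous (minGap : (Fin n → ℝ) → ℝ) :=
  Continuous.finset_inf'_apply _ fun i _ => continuous_gap i

lemma measurable_minGap_val : Measurable fun m : Fplus n => minGap (m : Fin n → ℝ) :=
  continuous_minGap.measurable.comp measurable_subtype_coe

lemma measurableSet_Fplus (n : ℕ) : MeasurableSet (Fplus n) := by
  have : Fplus n = {m | 0 < minGap m} := ext fun _ => mem_Fplus_iff_minGap_pos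
  exact this ▸ measurableSet_lt measurable_const continuous_minGap.measurable

lemma isCompact_setOf_le_minGap {η : ℝ} (hη : 0 < η) :
    IsCompact {m : Fplus n | η ≤ minGap (m : Fin n → ℝ)} := by
  have image_eq : Subtype.val '' {m : Fplus n | η ≤ minGap (m : Fin n → ℝ)} = {m | η ≤ minGap m} :=
    Subset.antisymm (image_subset_iff.mpr fun _ hm => hm) fun m hm =>
      ⟨⟨m, mem_Fplus_iff_minGap_pos.mpr (hη.trans_le hm)⟩, hm, rfl⟩
  rw [Subtype.isCompact_iff, image_eq]
  refine (isCompact_Icc (a := (0 : Fin n → ℝ)) (b := 1)).of_isClosed_subset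
    (isClosed_le continuous_const continuous_minGap) fun m hm => ?_
  have hIoo := (mem_Fplus_iff_minGap_pos.mpr (hη.trans_le hm)).2
  exact ⟨fun i => (hIoo i).1.le, fun i => (hIoo i).2.le⟩

lemma nonempty_Fplus (n : ℕ) : (Fplus n).Nonempty := by
  refine ⟨fun i => ((i : ℝ) + 1) / (n + 1), fun i j hij => ?_, fun i => ⟨by positivity, ?_⟩⟩
  · have : (i : ℝ) < j := by exact_mod_cast hij
    simp only
    gcongr
  · have : (i : ℝ) < n := by exact_mod_cast i.2
    rw [div_lt_one (by positivity)]
    linarith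

end Padded

/-! ### One step of the algorithm on the gaps -/

section Update

variable {n : ℕ} {Λ : ℕ → ℝ} {ε : ℝ} {w : Fin n} {m : Fin n → ℝ} {x : ℝ} {i k₀ : ℕ}

/-- The factor `Λ (|i - w|)` at the position `i + 1` of unit `i` when the winner is `w`, and `0` at
the positions of `padded` that do not carry a unit, as these do not move. -/
def gain (Λ : ℕ → ℝ) (w : Fin n) : ℕ → ℝ
  | 0 => 0
  | k + 1 => if k < n then Λ (Nat.dist k w) else 0

lemma gain_succ_of_lt (w : Fin n) (h : i < n) : gain Λ w (i + 1) = Λ (Nat.dist i w) :=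
  if_pos h

lemma gain_succ_of_le (w : Fin n) (h : n ≤ i) : gain Λ w (i + 1) = 0 :=
  if_neg h.not_gt

lemma gain_mem_Icc (hΛI : ∀ k, Λ k ∈ Icc 0 1) (w : Fin n) (i : ℕ) : gain Λ w i ∈ Icc 0 1 := by
  rcases i with _ | k
  · exact ⟨le_rfl, zero_le_one⟩
  · rcases lt_or_ge k n with hk | hk
    · exact gain_succ_of_lt w hk ▸ hΛI _
    · rw [gain_succ_of_le w hk]
      exact ⟨le_rfl, zero_le_one⟩

lemma gain_le_gain_succ (hΛ : Antitone Λ) (hΛI : ∀ k, Λ k ∈ Icc 0 1) (hi : i ≤ w) :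
    gain Λ w i ≤ gain Λ w (i + 1) := by
  have := w.2
  rcases i with _ | k
  · exact (gain_mem_Icc hΛI w 1).1
  · rw [gain_succ_of_lt w (by omega), gain_succ_of_lt w (by omega)]
    exact hΛ (by simp only [Nat.dist]; omega)

lemma gain_succ_le_gain (hΛ : Antitone Λ) (hΛI : ∀ k, Λ k ∈ Icc 0 1) (hi : w < i) :
    gain Λ w (i + 1) ≤ gain Λ w i := by
  obtain ⟨k, rfl⟩ := Nat.exists_eq_succ_of_ne_zero (by omega : i ≠ 0)
  rcases lt_or_ge (k + 1) n with hk | hk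
  · rw [gain_succ_of_lt w hk, Nat.succ_eq_add_one, gain_succ_of_lt w (by omega)]
    exact hΛ (by simp only [Nat.dist]; omega)
  · rw [gain_succ_of_le w hk]
    exact (gain_mem_Icc hΛI w _).1

lemma sub_le_gain_succ_sub_gain (hΛ : Antitone Λ) (hΛI : ∀ k, Λ k ∈ Icc 0 1) (k₀ : ℕ) (w : Fin n) :
    Λ k₀ - Λ (k₀ + 1) ≤ gain Λ w (w - k₀ + 1) - gain Λ w (w - k₀) := by
  have := w.2
  rw [gain_succ_of_lt w (by omega)]
  refine sub_le_sub (hΛ (by simp only [Nat.dist]; omega)) ?_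
  rcases Nat.eq_zero_or_pos (w - k₀) with h | h
  · exact h ▸ (hΛI _).1
  · obtain ⟨k, hk⟩ := Nat.exists_eq_succ_of_ne_zero h.ne'
    rw [hk, Nat.succ_eq_add_one, gain_succ_of_lt w (by omega)]
    exact hΛ (by simp only [Nat.dist]; omega)

lemma sub_le_gain_sub_gain_succ (hΛ : Antitone Λ) (hΛI : ∀ k, Λ k ∈ Icc 0 1) (k₀ : ℕ) (w : Fin n) :
    Λ k₀ - Λ (k₀ + 1) ≤ gain Λ w (min (w + 1 + k₀) n) - gain Λ w (min (w + 1 + k₀) n + 1) := by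
  have := w.2
  obtain ⟨k, hk⟩ := Nat.exists_eq_succ_of_ne_zero (by omega : min (w + 1 + k₀) n ≠ 0)
  rw [hk, Nat.succ_eq_add_one, gain_succ_of_lt w (by omega)]
  refine sub_le_sub (hΛ (by simp only [Nat.dist]; omega)) ?_
  rcases lt_or_ge (k + 1) n with h | h
  · rw [gain_succ_of_lt w h]
    exact hΛ (by simp only [Nat.dist]; omega)
  · rw [gain_succ_of_le w h]
    exact (hΛI _).1

lemma one_sub_mul_gap_le_one_sub_mul_gain_mul_gap (hΛI : ∀ k, Λ k ∈ Icc 0 1) (hε : 0 ≤ ε)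
    (hm : m ∈ Fplus n) (w : Fin n) (i j : ℕ) :
    (1 - ε) * gap m i ≤ (1 - ε * gain Λ w j) * gap m i := by
  have : ε * gain Λ w j ≤ ε := mul_le_of_le_one_right hε (gain_mem_Icc hΛI w j).2
  exact mul_le_mul_of_nonneg_right (by linarith) (gap_nonneg hm i)

variable [NeZero n]

lemma padded_somUpdate (k : ℕ) : padded (somUpdate Λ ε m x) k =
    padded m k - ε * gain Λ (winner m x) k * (padded m k - x) := by
  rcases k with _ | k
  · simp [gain]
  · by_cases hk : k < n <;> simp [padded, gain, somUpdate, hk]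

-- The update can be expanded around either end point of the gap; the sign of the second summand is
-- controlled by the first expansion to the left of the winner, by the second one to its right.
lemma le_gap_somUpdate_left (hΛI : ∀ k, Λ k ∈ Icc 0 1) (hε : 0 ≤ ε) (hm : m ∈ Fplus n) (x : ℝ)
    (i : ℕ) : (1 - ε) * gap m i + ε * ((gain Λ (winner m x) (i + 1) - gain Λ (winner m x) i) *
      (x - padded m i)) ≤ gap (somUpdate Λ ε m x) i := by
  have hgain := one_sub_mul_gap_le_one_sub_mul_gain_mul_gap hΛI hε hm (winner m x) i (i + 1)
  refine (add_le_add_left hgain _).trans_eq ?_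
  simp only [gap, padded_somUpdate]
  ring

lemma le_gap_somUpdate_right (hΛI : ∀ k, Λ k ∈ Icc 0 1) (hε : 0 ≤ ε) (hm : m ∈ Fplus n) (x : ℝ)
    (i : ℕ) : (1 - ε) * gap m i + ε * ((gain Λ (winner m x) i - gain Λ (winner m x) (i + 1)) *
      (padded m (i + 1) - x)) ≤ gap (somUpdate Λ ε m x) i := by
  have hgain := one_sub_mul_gap_le_one_sub_mul_gain_mul_gap hΛI hε hm (winner m x) i i
  refine (add_le_add_left hgain _).trans_eq ?_
  simp only [gap, padded_somUpdate]
  ring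

lemma padded_le_of_le_winner (hm : m ∈ Fplus n) (hx : 0 ≤ x) (hi : i ≤ winner m x) :
    padded m i ≤ x := by
  rcases i with _ | k
  · exact hx
  · rw [padded_succ_of_lt m (hi.trans (winner m x).2.le)]
    exact apply_le_of_lt_winner hm.1 (Fin.lt_def.mpr hi)

lemma le_padded_succ_of_winner_lt (hm : m ∈ Fplus n) (hx : x ≤ 1) (hi : winner m x < i) :
    x ≤ padded m (i + 1) := by
  rcases lt_or_ge i n with h | h
  · rw [padded_succ_of_lt m h]
    exact le_apply_of_winner_lt hm.1 (Fin.lt_def.mpr hi)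
  · rwa [padded_succ_of_le m h]

lemma one_sub_mul_gap_le (hΛ : Antitone Λ) (hΛI : ∀ k, Λ k ∈ Icc 0 1) (hε : 0 ≤ ε)
    (hm : m ∈ Fplus n) (hx : x ∈ Icc 0 1) (i : ℕ) :
    (1 - ε) * gap m i ≤ gap (somUpdate Λ ε m x) i := by
  rcases le_or_gt i (winner m x) with hi | hi
  · refine (le_add_of_nonneg_right ?_).trans (le_gap_somUpdate_left hΛI hε hm x i)
    exact mul_nonneg hε (mul_nonneg (sub_nonneg.mpr (gain_le_gain_succ hΛ hΛI hi))
      (sub_nonneg.mpr (padded_le_of_le_winner hm hx.1 hi)))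
  · refine (le_add_of_nonneg_right ?_).trans (le_gap_somUpdate_right hΛI hε hm x i)
    exact mul_nonneg hε (mul_nonneg (sub_nonneg.mpr (gain_succ_le_gain hΛ hΛI hi))
      (sub_nonneg.mpr (le_padded_succ_of_winner_lt hm hx.2 hi)))

lemma somUpdate_mem_Fplus (hΛ : Antitone Λ) (hΛI : ∀ k, Λ k ∈ Icc 0 1) (hε : ε ∈ Ioo 0 1)
    (hm : m ∈ Fplus n) (hx : x ∈ Icc 0 1) : somUpdate Λ ε m x ∈ Fplus n :=
  mem_Fplus_of_gap_pos fun i hi => (mul_pos (sub_pos.mpr hε.2) (gap_pos hm hi)).trans_le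
    (one_sub_mul_gap_le hΛ hΛI hε.1.le hm hx i)

lemma one_sub_mul_minGap_le (hΛ : Antitone Λ) (hΛI : ∀ k, Λ k ∈ Icc 0 1) (hε : ε ∈ Ioo 0 1)
    (hm : m ∈ Fplus n) (hx : x ∈ Icc 0 1) :
    (1 - ε) * minGap m ≤ minGap (somUpdate Λ ε m x) :=
  le_minGap_iff.mpr fun i hi =>
    (mul_le_mul_of_nonneg_left (le_minGap_iff.mp le_rfl i hi) (sub_nonneg.mpr hε.2.le)).trans
      (one_sub_mul_gap_le hΛ hΛI hε.1.le hm hx i)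

variable {ρ : ℝ}

lemma mul_le_gap_somUpdate_sub (hΛ : Antitone Λ) (hΛI : ∀ k, Λ k ∈ Icc 0 1) (hε : ε ∈ Ioo 0 1)
    (hm : m ∈ Fplus n) (hρ : 0 ≤ ρ) (hx : padded m (winner m x) + ρ ≤ x) (k₀ : ℕ) :
    ε * ((Λ k₀ - Λ (k₀ + 1)) * ρ) ≤ gap (somUpdate Λ ε m x) (winner m x - k₀) := by
  have hmono := monotone_padded hm (Nat.sub_le (winner m x) k₀)
  have hgain := sub_le_gain_succ_sub_gain hΛ hΛI k₀ (winner m x)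
  have hdrop : 0 ≤ Λ k₀ - Λ (k₀ + 1) := sub_nonneg.mpr (hΛ k₀.le_succ)
  refine le_trans ?_ (le_gap_somUpdate_left hΛI hε.1.le hm x _)
  refine le_add_of_nonneg_of_le (mul_nonneg (sub_nonneg.mpr hε.2.le) (gap_nonneg hm _)) ?_
  exact mul_le_mul_of_nonneg_left
    (mul_le_mul hgain (by linarith) hρ (hdrop.trans hgain)) hε.1.le

lemma mul_le_gap_somUpdate_min (hΛ : Antitone Λ) (hΛI : ∀ k, Λ k ∈ Icc 0 1) (hε : ε ∈ Ioo 0 1)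
    (hm : m ∈ Fplus n) (hρ : 0 ≤ ρ) (hx : x ≤ padded m (winner m x + 2) - ρ) (k₀ : ℕ) :
    ε * ((Λ k₀ - Λ (k₀ + 1)) * ρ) ≤ gap (somUpdate Λ ε m x) (min (winner m x + 1 + k₀) n) := by
  have hw := (winner m x).2
  have hmono := monotone_padded hm
    (by omega : (winner m x : ℕ) + 2 ≤ min (winner m x + 1 + k₀) n + 1)
  have hgain := sub_le_gain_sub_gain_succ hΛ hΛI k₀ (winner m x)
  have hdrop : 0 ≤ Λ k₀ - Λ (k₀ + 1) := sub_nonneg.mpr (hΛ k₀.le_succ)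
  refine le_trans ?_ (le_gap_somUpdate_right hΛI hε.1.le hm x _)
  refine le_add_of_nonneg_of_le (mul_nonneg (sub_nonneg.mpr hε.2.le) (gap_nonneg hm _)) ?_
  exact mul_le_mul_of_nonneg_left
    (mul_le_mul hgain (by linarith) hρ (hdrop.trans hgain)) hε.1.le

end Update

/-! ### Opening a closed gap -/

-- Otherwise `O` is stable under moving by `k₀` to one side and then by `k₀ + 1` to the other, that
-- is, under successor and predecessor.
lemma exists_adjacent_and_not_distant {n k₀ : ℕ} (hk : 2 * k₀ + 1 ≤ n) {O : ℕ → Prop}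
    (hO : ∃ i ≤ n, O i) (hO' : ∃ i ≤ n, ¬ O i) :
    ∃ w : Fin n, (O w ∨ O (w + 1)) ∧ (¬ O (w - k₀) ∨ ¬ O (min (w + 1 + k₀) n)) := by
  by_contra! h
  have left {w : ℕ} (hw : w < n) (hOw : O w ∨ O (w + 1)) : O (w - k₀) := (h ⟨w, hw⟩ hOw).1
  have right {w : ℕ} (hw : w < n) (hOw : O w ∨ O (w + 1)) : O (min (w + 1 + k₀) n) :=
    (h ⟨w, hw⟩ hOw).2
  have succ {i : ℕ} (hi : i < n) (hOi : O i) : O (i + 1) := by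
    rcases le_or_gt k₀ i with hik | hik
    · have := right (w := i - k₀) (by omega) (.inl (left hi (.inl hOi)))
      rwa [show min (i - k₀ + 1 + k₀) n = i + 1 by omega] at this
    · have h₁ := right hi (.inl hOi)
      rw [show min (i + 1 + k₀) n = i + 1 + k₀ by omega] at h₁
      have h₂ := left (w := i + 1 + k₀) (by omega) (.inl h₁)
      rwa [Nat.add_sub_cancel] at h₂
  have pred {i : ℕ} (hi : i < n) (hOi : O (i + 1)) : O i := by
    rcases lt_or_ge (i + k₀) n with hik | hik
    · have h₁ := right hi (.inr hOi)
      rw [show min (i + 1 + k₀) n = i + k₀ + 1 by omega] at h₁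
      have h₂ := left (w := i + k₀) hik (.inr h₁)
      rwa [Nat.add_sub_cancel] at h₂
    · have h₁ := left hi (.inr hOi)
      rw [show i - k₀ = i - k₀ - 1 + 1 by omega] at h₁
      have h₂ := right (w := i - k₀ - 1) (by omega) (.inr h₁)
      rwa [show min (i - k₀ - 1 + 1 + k₀) n = i by omega] at h₂
  have iff_zero {i : ℕ} (hi : i ≤ n) : O i ↔ O 0 := by
    induction i with
    | zero => rfl
    | succ i ih => exact Iff.trans ⟨pred hi, succ hi⟩ (ih (by omega))
  obtain ⟨i, hi, hOi⟩ := hO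
  obtain ⟨j, hj, hOj⟩ := hO'
  exact hOj ((iff_zero hj).mpr ((iff_zero hi).mp hOi))

section Opening

variable {n : ℕ} {m : Fin n → ℝ} {δ : ℝ}

-- An input at distance `3 * δ / 8` from `m w` inside the long gap is, up to an error of `δ / 8`, at
-- distance at most `δ / 2` from `m w` and at least `δ / 2` from the other end point of the gap.
lemma exists_forall_ball_winner_eq [NeZero n] (hm : m ∈ Fplus n) (w : Fin n) (hδ : 0 < δ)
    (h : δ ≤ gap m w ∨ δ ≤ gap m (w + 1)) :
    ∃ c : unitInterval, ∀ x ∈ Metric.ball c (δ / 8), winner m x = w ∧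
      padded m w + δ / 4 ≤ x ∧ (x : ℝ) ≤ padded m (w + 2) - δ / 4 := by
  have hmono := monotone_padded hm
  have below {j : Fin n} (hj : j < w) : m j ≤ padded m w := by
    rw [← padded_val_succ m j]
    exact hmono (Fin.lt_def.mp hj)
  have above {j : Fin n} (hj : w < j) : padded m (w + 2) ≤ m j := by
    rw [← padded_val_succ m j]
    exact hmono (Nat.succ_le_succ (Fin.lt_def.mp hj))
  have hlt₁ := gap_pos hm w.2.le
  have hlt₂ := gap_pos hm (Nat.succ_le_of_lt w.2)
  have h0 := (padded_mem_Icc hm w).1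
  have h1 := (padded_mem_Icc hm (w + 2)).2
  simp only [gap, Nat.succ_eq_add_one, padded_val_succ, add_assoc, one_add_one_eq_two]
    at h hlt₁ hlt₂
  rcases h with h | h
  · refine ⟨⟨m w - 3 * δ / 8, by linarith, by linarith⟩, fun x hx => ?_⟩
    rw [Metric.mem_ball, Subtype.dist_eq, Real.dist_eq, abs_lt] at hx
    refine ⟨winner_eq_of_forall_midpoint hm.1 (fun j hj => ?_) (fun j hj => ?_), ?_, ?_⟩
    · linarith [below hj]
    · linarith [above hj]
    · linarith
    · linarith
  · refine ⟨⟨m w + 3 * δ / 8, by linarith, by linarith⟩, fun x hx => ?_⟩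
    rw [Metric.mem_ball, Subtype.dist_eq, Real.dist_eq, abs_lt] at hx
    refine ⟨winner_eq_of_forall_midpoint hm.1 (fun j hj => ?_) (fun j hj => ?_), ?_, ?_⟩
    · linarith [below hj]
    · linarith [above hj]
    · linarith
    · linarith

end Opening

/-! ### The number of open gaps -/

section OpenGaps

variable {n : ℕ} {Λ : ℕ → ℝ} {ε δ c : ℝ} {m : Fin n → ℝ} {i k₀ : ℕ}

/-- The gaps of `m` that are open at the scale `δ`, that is, of length at least `δ`. -/
def openGaps (δ : ℝ) (m : Fin n → ℝ) : Finset ℕ :=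
  (Finset.range (n + 1)).filter fun i => δ ≤ gap m i

lemma mem_openGaps : i ∈ openGaps δ m ↔ i ≤ n ∧ δ ≤ gap m i := by
  simp [openGaps]

lemma card_openGaps_pos (m : Fin n → ℝ) : 0 < (openGaps ((n : ℝ) + 1)⁻¹ m).card :=
  Finset.card_pos.mpr ((exists_inv_le_gap m).imp fun _ => mem_openGaps.mpr)

lemma le_minGap_iff_lt_card_openGaps : δ ≤ minGap m ↔ n < (openGaps δ m).card := by
  rw [le_minGap_iff, Nat.lt_iff_add_one_le]
  have hsub : openGaps δ m ⊆ Finset.range (n + 1) := Finset.filter_subset _ _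
  refine ⟨fun h => ?_, fun h i hi => ?_⟩
  · rw [openGaps, Finset.filter_true_of_mem fun i hi => h i (Finset.mem_range_succ_iff.mp hi),
      Finset.card_range]
  · have heq := Finset.eq_of_subset_of_card_le hsub (by simpa using h)
    exact (mem_openGaps.mp (heq ▸ Finset.mem_range_succ_iff.mpr hi)).2

lemma measurableSet_lt_card_openGaps (δ : ℝ) (k : ℕ) :
    MeasurableSet {m : Fin n → ℝ | k < (openGaps δ m).card} := by
  simp only [openGaps, Finset.card_filter]
  refine measurableSet_lt measurable_const (Finset.measurable_sum _ fun i _ => ?_)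
  exact Measurable.ite (measurableSet_le measurable_const (continuous_gap i).measurable)
    measurable_const measurable_const

variable [NeZero n]

lemma openGaps_subset_openGaps_somUpdate (hΛ : Antitone Λ) (hΛI : ∀ k, Λ k ∈ Icc 0 1) (hε : 0 ≤ ε)
    (hc : 0 ≤ c) (hcε : c ≤ 1 - ε) (hm : m ∈ Fplus n) {x : ℝ} (hx : x ∈ Icc 0 1) :
    openGaps δ m ⊆ openGaps (c * δ) (somUpdate Λ ε m x) := by
  intro i hi
  obtain ⟨hin, hδ⟩ := mem_openGaps.mp hi
  refine mem_openGaps.mpr ⟨hin, ?_⟩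
  calc c * δ ≤ c * gap m i := by gcongr
    _ ≤ (1 - ε) * gap m i := by gcongr; exact gap_nonneg hm i
    _ ≤ gap (somUpdate Λ ε m x) i := one_sub_mul_gap_le hΛ hΛI hε hm hx i

lemma exists_forall_ball_card_openGaps_lt (hΛ : Antitone Λ) (hΛI : ∀ k, Λ k ∈ Icc 0 1)
    (hk : 2 * k₀ + 1 ≤ n) (hε : ε ∈ Ioo 0 1) (hc : 0 ≤ c) (hcε : c ≤ 1 - ε)
    (hcΛ : c ≤ ε * (Λ k₀ - Λ (k₀ + 1)) / 4) (hδ : 0 < δ) (hm : m ∈ Fplus n)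
    (hopen : 0 < (openGaps δ m).card) (hclosed : (openGaps δ m).card ≤ n) :
    ∃ t : unitInterval, ∀ x ∈ Metric.ball t (δ / 8),
      (openGaps δ m).card < (openGaps (c * δ) (somUpdate Λ ε m x)).card := by
  have exists_not_mem : ∃ i ≤ n, i ∉ openGaps δ m := by
    have : ¬ δ ≤ minGap m := fun h => hclosed.not_gt (le_minGap_iff_lt_card_openGaps.mp h)
    simp only [le_minGap_iff, not_forall] at this
    obtain ⟨i, hi, h⟩ := this
    exact ⟨i, hi, fun hmem => h (mem_openGaps.mp hmem).2⟩
  have exists_mem : ∃ i ≤ n, i ∈ openGaps δ m :=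
    (Finset.card_pos.mp hopen).imp fun i hi => ⟨(mem_openGaps.mp hi).1, hi⟩
  obtain ⟨w, hadj, hdist⟩ := exists_adjacent_and_not_distant hk exists_mem exists_not_mem
  obtain ⟨t, ht⟩ := exists_forall_ball_winner_eq hm w hδ
    (hadj.imp (fun h => (mem_openGaps.mp h).2) fun h => (mem_openGaps.mp h).2)
  refine ⟨t, fun x hx => Finset.card_lt_card ?_⟩
  obtain ⟨hw, hlo, hhi⟩ := ht x hx
  have hwn := (winner m x).2
  rw [← hw] at hlo hhi hdist
  have hcδ : c * δ ≤ ε * ((Λ k₀ - Λ (k₀ + 1)) * (δ / 4)) := by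
    linarith [mul_le_mul_of_nonneg_right hcΛ hδ.le]
  rw [Finset.ssubset_iff_of_subset
    (openGaps_subset_openGaps_somUpdate hΛ hΛI hε.1.le hc hcε hm x.2)]
  rcases hdist with hdist | hdist
  · refine ⟨_, mem_openGaps.mpr ⟨by omega, hcδ.trans ?_⟩, hdist⟩
    exact mul_le_gap_somUpdate_sub hΛ hΛI hε hm (by linarith) hlo k₀
  · refine ⟨_, mem_openGaps.mpr ⟨by omega, hcδ.trans ?_⟩, hdist⟩
    exact mul_le_gap_somUpdate_min hΛ hΛI hε hm (by linarith) hhi k₀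

lemma exists_forall_ball_lt_card_openGaps (hΛ : Antitone Λ) (hΛI : ∀ k, Λ k ∈ Icc 0 1)
    (hk : 2 * k₀ + 1 ≤ n) (hε : ε ∈ Ioo 0 1) (hc : 0 ≤ c) (hcε : c ≤ 1 - ε)
    (hcΛ : c ≤ ε * (Λ k₀ - Λ (k₀ + 1)) / 4) (hδ : 0 < δ) (hm : m ∈ Fplus n) {j : ℕ} (hj : j < n)
    (h : j < (openGaps δ m).card) :
    ∃ t : unitInterval, ∀ x ∈ Metric.ball t (δ / 8),
      j + 1 < (openGaps (c * δ) (somUpdate Λ ε m x)).card := by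
  rcases le_or_gt (openGaps δ m).card n with hclosed | hall
  · obtain ⟨t, ht⟩ := exists_forall_ball_card_openGaps_lt hΛ hΛI hk hε hc hcε hcΛ hδ hm
      (by omega) hclosed
    exact ⟨t, fun x hx => (Nat.succ_le_of_lt h).trans_lt (ht x hx)⟩
  · exact ⟨0, fun x _ => (by omega : j + 1 < (openGaps δ m).card).trans_le
      (Finset.card_le_card (openGaps_subset_openGaps_somUpdate hΛ hΛI hε.1.le hc hcε hm x.2))⟩

end OpenGaps

/-! ### The chain on ordered states -/

section Chain

variable {n : ℕ} [NeZero n] {Λ : ℕ → ℝ} {ε : ℝ} {k₀ : ℕ}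

/-- The update as a map of ordered states, for inputs in the unit interval. -/
def orderedUpdate (hΛ : Antitone Λ) (hΛI : ∀ k, Λ k ∈ Icc 0 1) (hε : ε ∈ Ioo 0 1) (m : Fplus n)
    (x : unitInterval) : Fplus n :=
  ⟨somUpdate Λ ε m x, somUpdate_mem_Fplus hΛ hΛI hε m.2 x.2⟩

variable (hΛ : Antitone Λ) (hΛI : ∀ k, Λ k ∈ Icc 0 1) (hε : ε ∈ Ioo 0 1)

lemma measurable_orderedUpdate : Measurable (uncurry (orderedUpdate (n := n) hΛ hΛI hε)) :=
  ((measurable_somUpdate Λ ε).comp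
    (measurable_subtype_coe.prodMap measurable_subtype_coe)).subtype_mk

variable (n) in
/-- The transition kernel of the algorithm on ordered states, for inputs of law `ν`. -/
def orderedKernel (ν : Measure unitInterval) [SFinite ν] : Kernel (Fplus n) (Fplus n) :=
  randomMapKernel ν (orderedUpdate hΛ hΛI hε) (measurable_orderedUpdate hΛ hΛI hε)

variable {ν : Measure unitInterval} [IsProbabilityMeasure ν]

instance : IsMarkovKernel (orderedKernel n hΛ hΛI hε ν) :=
  inferInstanceAs (IsMarkovKernel (randomMapKernel ν _ _))

lemma isFeller_orderedKernel [NullSingletonClass ν] : IsFeller (orderedKernel n hΛ hΛI hε ν) := by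
  refine isFeller_randomMapKernel _ fun m => ?_
  filter_upwards [ae_forall_abs_sub_winner_lt m.2.1.injective] with x hx
  exact IsInducing.subtypeVal.continuousAt_iff.mpr
    ((continuousAt_somUpdate Λ ε hx).comp continuousAt_subtype_val)

lemma ae_orderedKernel_one_sub_mul_minGap_le (m : Fplus n) :
    ∀ᵐ y : Fplus n ∂orderedKernel n hΛ hΛI hε ν m,
      (1 - ε) * minGap (m : Fin n → ℝ) ≤ minGap (y : Fin n → ℝ) := by
  refine (ae_map_iff (measurable_orderedUpdate hΛ hΛI hε).of_uncurry_left.aemeasurable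
    (measurableSet_le measurable_const measurable_minGap_val)).mpr (.of_forall fun x => ?_)
  exact one_sub_mul_minGap_le hΛ hΛI hε m.2 x.2

lemma exists_forall_le_orderedKernel_card_openGaps [ν.IsOpenPosMeasure] (hk : 2 * k₀ + 1 ≤ n)
    {c : ℝ} (hc : 0 ≤ c) (hcε : c ≤ 1 - ε) (hcΛ : c ≤ ε * (Λ k₀ - Λ (k₀ + 1)) / 4) {δ₀ : ℝ}
    (hδ₀ : 0 < δ₀) :
    ∃ p > 0, ∀ δ ≥ δ₀, ∀ j < n, ∀ m : Fplus n, j < (openGaps δ (m : Fin n → ℝ)).card →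
      p ≤ orderedKernel n hΛ hΛI hε ν m
        {y | j + 1 < (openGaps (c * δ) (y : Fin n → ℝ)).card} := by
  obtain ⟨p, hp, hball⟩ := exists_pos_forall_le_measure_ball (μ := ν) isCompact_univ
    Measure.support_eq_univ.ge (by linarith : 0 < δ₀ / 8)
  refine ⟨p, hp, fun δ hδ j hj m hm => ?_⟩
  obtain ⟨t, ht⟩ :=
    exists_forall_ball_lt_card_openGaps hΛ hΛI hk hε hc hcε hcΛ (hδ₀.trans_le hδ) m.2 hj hm
  set W := {y : Fplus n | j + 1 < (openGaps (c * δ) (y : Fin n → ℝ)).card}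
  have hW : MeasurableSet W := measurable_subtype_coe (measurableSet_lt_card_openGaps (c * δ) _)
  have hsub : Metric.ball t (δ₀ / 8) ⊆ orderedUpdate hΛ hΛI hε m ⁻¹' W :=
    fun x hx => ht x (Metric.ball_subset_ball (by linarith) hx)
  calc p ≤ ν (Metric.ball t (δ₀ / 8)) := hball t (mem_univ t)
    _ ≤ ν (orderedUpdate hΛ hΛI hε m ⁻¹' W) := measure_mono hsub
    _ = orderedKernel n hΛ hΛI hε ν m W :=
        (Measure.map_apply (measurable_orderedUpdate hΛ hΛI hε).of_uncurry_left hW).symm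

-- Some gap is open at the scale `1 / (n + 1)`; if each of the next `n` steps opens one more, then
-- all `n + 1` gaps are open at the scale `δ`.
lemma exists_orderedKernel_pow_minGap_lt_le [ν.IsOpenPosMeasure] (hk : 2 * k₀ + 1 ≤ n)
    (hlt : Λ (k₀ + 1) < Λ k₀) :
    ∃ δ > 0, ∃ q < 1, ∀ m : Fplus n,
      (orderedKernel n hΛ hΛI hε ν ^ n) m {y | minGap (y : Fin n → ℝ) < δ} ≤ q := by
  obtain ⟨c, hc, hcε, hcΛ⟩ : ∃ c > 0, c ≤ 1 - ε ∧ c ≤ ε * (Λ k₀ - Λ (k₀ + 1)) / 4 :=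
    ⟨min (1 - ε) (ε * (Λ k₀ - Λ (k₀ + 1)) / 4), lt_min (sub_pos.mpr hε.2)
      (div_pos (mul_pos hε.1 (sub_pos.mpr hlt)) four_pos), min_le_left _ _, min_le_right _ _⟩
  have hc1 : c ≤ 1 := hcε.trans (sub_le_self 1 hε.1.le)
  set δ : ℕ → ℝ := fun j => c ^ j * ((n : ℝ) + 1)⁻¹
  have hδ : 0 < δ n := by positivity
  set W : ℕ → Set (Fplus n) := fun j => {m | j < (openGaps (δ j) (m : Fin n → ℝ)).card}
  have hW (j : ℕ) : MeasurableSet (W j) :=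
    measurable_subtype_coe (measurableSet_lt_card_openGaps (δ j) j)
  obtain ⟨p, hp, hle⟩ := exists_forall_le_orderedKernel_card_openGaps hΛ hΛI hε (ν := ν) hk hc.le
    hcε hcΛ hδ
  have hstep (j : ℕ) (hj : j < n) (m : Fplus n) (hm : m ∈ W j) :
      p ≤ orderedKernel n hΛ hΛI hε ν m (W (j + 1)) := by
    have hδj : δ n ≤ δ j :=
      mul_le_mul_of_nonneg_right (pow_le_pow_of_le_one hc.le hc1 hj.le) (by positivity)
    have hsucc : δ (j + 1) = c * δ j := by simp only [δ, pow_succ', mul_assoc]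
    simpa only [W, hsucc] using hle (δ j) hδj j hj m hm
  refine ⟨δ n, hδ, 1 - p ^ n, ENNReal.sub_lt_self ENNReal.one_ne_top one_ne_zero
    (pow_ne_zero _ hp.ne'), fun m => ?_⟩
  have hcompl : {y : Fplus n | minGap (y : Fin n → ℝ) < δ n} = (W n)ᶜ := by
    ext y
    exact not_le.symm.trans le_minGap_iff_lt_card_openGaps.not
  have := isMarkovKernel_pow (κ := orderedKernel n hΛ hΛI hε ν) n
  rw [hcompl, prob_compl_eq_one_sub (hW n)]
  refine tsub_le_tsub_left (pow_le_kernel_pow_apply hW hstep ?_) 1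
  simpa only [W, δ, pow_zero, one_mul, mem_ofPred_eq] using card_openGaps_pos (m : Fin n → ℝ)

lemma exists_invariant_orderedKernel [NullSingletonClass ν] [ν.IsOpenPosMeasure]
    (hk : 2 * k₀ + 1 ≤ n) (hlt : Λ (k₀ + 1) < Λ k₀) :
    ∃ π, IsProbabilityMeasure π ∧ (orderedKernel n hΛ hΛI hε ν).Invariant π := by
  obtain ⟨m, hm⟩ := nonempty_Fplus n
  obtain ⟨δ, hδ, q, hq, hreturn⟩ :=
    exists_orderedKernel_pow_minGap_lt_le hΛ hΛI hε (ν := ν) hk hlt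
  exact (isFeller_orderedKernel hΛ hΛI hε).exists_invariant
    (ν := fun k => ⟨(orderedKernel n hΛ hΛI hε ν ^ k) ⟨m, hm⟩, (isMarkovKernel_pow k).1 _⟩)
    (fun k => (bind_pow_apply _ k).symm)
    (isTightMeasureSet_range_kernel_pow measurable_minGap_val
      (fun _ => isCompact_setOf_le_minGap) (sub_pos.mpr hε.2) (sub_le_self 1 hε.1.le) hδ hq
      (ae_orderedKernel_one_sub_mul_minGap_le hΛ hΛI hε) hreturn
      (mem_Fplus_iff_minGap_pos.mp hm))

end Chain

/-! ### Inputs on the real line -/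

lemma Hmu.continuousOn {f : ℝ → ℝ} (h : Hmu f) : ContinuousOn f (Ioo 0 1) := by
  have hconc : ConcaveOn ℝ (Ioo 0 1) fun x => Real.log (f x) :=
    h.2.elim StrictConcaveOn.concaveOn And.left
  exact (hconc.continuousOn isOpen_Ioo).rexp.congr fun x hx => (Real.exp_log (h.1 x hx)).symm

lemma Hmu.support_withDensity {f : ℝ → ℝ} (h : Hmu f) (hf : ∀ x ∉ Icc 0 1, f x = 0) :
    (volume.withDensity fun x => ENNReal.ofReal (f x)).support = Icc 0 1 := by
  refine Subset.antisymm (Measure.support_subset_of_isClosed isClosed_Icc ?_) ?_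
  · rw [mem_ae_iff, withDensity_apply _ measurableSet_Icc.compl,
      setLIntegral_congr_fun (g := 0) measurableSet_Icc.compl fun x hx => by simp [hf x hx]]
    simp
  · rw [← closure_Ioo zero_ne_one]
    exact closure_subset_support_withDensity isOpen_Ioo
      (ENNReal.continuous_ofReal.comp_continuousOn h.continuousOn)
      fun x hx => (ENNReal.ofReal_pos.mpr (h.1 x hx)).ne'

theorem som_invariant_measure_exists_general {n : ℕ} [NeZero n] {Λ : ℕ → ℝ} (hΛ : Antitone Λ)
    (hΛI : ∀ k, Λ k ∈ Icc 0 1) {k₀ : ℕ} (hk : 2 * k₀ + 1 ≤ n) (hlt : Λ (k₀ + 1) < Λ k₀)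
    {μ : Measure ℝ} [IsProbabilityMeasure μ] [NullSingletonClass μ] (hμ : μ.support = Icc 0 1)
    {ε : ℝ} (hε : ε ∈ Ioo 0 1) :
    ∃ ν : Measure (Fin n → ℝ), IsProbabilityMeasure ν ∧ IsSOMInvariant μ Λ ε ν ∧
      ν (Fplus n) = 1 := by
  have hae : ∀ᵐ x ∂μ, x ∈ Icc 0 1 := hμ ▸ Measure.support_mem_ae
  set ν : Measure unitInterval := μ.comap Subtype.val
  have hν : ν.map Subtype.val = μ := map_val_comap_val_of_ae_mem measurableSet_Icc hae
  have := nullSingletonClass_comap_val (μ := μ) (measurableSet_Icc (a := 0) (b := 1))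
  have := isOpenPosMeasure_comap_val measurableSet_Icc hae hμ.ge
  have : IsProbabilityMeasure (ν.map Subtype.val) := hν.symm ▸ inferInstance
  have := Measure.isProbabilityMeasure_of_map (μ := ν) Subtype.val
  obtain ⟨π, hπ, hinv⟩ := exists_invariant_orderedKernel hΛ hΛI hε (ν := ν) hk hlt
  refine ⟨π.map Subtype.val, Measure.isProbabilityMeasure_map measurable_subtype_coe.aemeasurable,
    ?_, ?_⟩
  · rw [IsSOMInvariant, ← hν]
    exact bind_map_eq_self_of_semiconj (measurable_orderedUpdate hΛ hΛI hε)
      (measurable_somUpdate Λ ε) measurable_subtype_coe measurable_subtype_coe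
      (fun _ _ => rfl) hinv
  · rw [Measure.map_apply measurable_subtype_coe (measurableSet_Fplus n),
      Subtype.coe_preimage_self, measure_univ]

/-- Under `H_Λ` and `H_μ`, for every constant gain
`ε ∈ (0,1)` the SOM transition kernel admits an invariant probability measure
carried by `F_n^+`. -/
theorem som_invariant_measure_exists {n : ℕ} [NeZero n] (hn : 2 ≤ n)
    (Λ : ℕ → ℝ) (hΛanti : Antitone Λ) (hΛ0 : Λ 0 = 1)
    (hΛrange : ∀ k, Λ k ∈ Set.Icc (0 : ℝ) 1) (hHΛ : HLambda n Λ)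
    (μ : Measure ℝ) [IsProbabilityMeasure μ] (f : ℝ → ℝ)
    (hdens : μ = volume.withDensity fun x => ENNReal.ofReal (f x))
    (hsupp : ∀ x, x ∉ Set.Icc (0 : ℝ) 1 → f x = 0)
    (hHμ : Hmu f)
    (ε : ℝ) (hε : ε ∈ Set.Ioo (0 : ℝ) 1) :
    ∃ ν : Measure (Fin n → ℝ), IsProbabilityMeasure ν ∧
      IsSOMInvariant μ Λ ε ν ∧ ν (Fplus n) = 1 := by
  obtain ⟨k₀, hk, hlt⟩ := hHΛ
  subst hdens
  exact som_invariant_measure_exists_general hΛanti hΛrange hk.le hlt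
    (hHμ.support_withDensity hsupp) hε

end
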